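/- arXiv:1303.0374 — 3 statements merged into one kernel-verified Lean document; each statement's English description precedes it below -/
import Mathlib

section
/- Let I = [0,1] and let F : I × I → I × I be a continuous triangular map, i.e. F(x, y) = (f(x), g(x, y)) for some continuous maps f : I → I and g : I × I → I. Let M be a minimal set of F and let pr₁(M) ⊆ I denote the projection of M onto the first coordinate. Then M is nowhere dense in the subspace pr₁(M) × I of I × I (equivalently, M has empty interior in the space pr₁(M) × I with the subspace topology). -/
open Set Topology unitInterval

/-!
A minimal map is *irreducible*: no proper closed subset of `M` is mapped onto `M` by an iterate.
Hence every nonempty relatively open subset of `M` contains a whole fibre of `F^[n]` in `M`.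

Suppose `M` contains a box `(V ∩ pr₁ M) × (p, q)`. Irreducibility forbids an iterate to fold a
vertical segment of the box, for then a whole open set of points on one side of the fold would
have twins on the other side. Fix `p < l < r < q` and let `(b, m)` be the highest point of `M`
over `b`. It is `F^[n] (c, s)` for some `(c, s)` in the smaller box `V × (l, r)`, and since there
is no fold at `s`, the iterate `F^[n]` is constant on `{c} × (p, l)` or on `{c} × (r, q)`. So
`pr₁ M` is the union of the images under the iterates of `f` of the sets of base points over which
one of these two segments is collapsed. By Baire and irreducibility of the minimal map `f` on
`pr₁ M`, one of these sets has interior in `pr₁ M`, and this contradicts the irreducibility of `F`.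
-/

theorem nonempty_interior_preimage_val_iff {X : Type*} [TopologicalSpace X] {s A : Set X} :
    (interior (Subtype.val ⁻¹' A : Set s)).Nonempty ↔
      ∃ O, IsOpen O ∧ (O ∩ s).Nonempty ∧ O ∩ s ⊆ A := by
  constructor
  · rintro ⟨x, hx⟩
    obtain ⟨_, hOA, ⟨O, hO, rfl⟩, hxO⟩ := mem_interior.1 hx
    exact ⟨O, hO, ⟨x, hxO, x.2⟩, fun y hy => hOA (a := ⟨y, hy.2⟩) hy.1⟩
  · rintro ⟨O, hO, ⟨x, hxO, hxs⟩, hOA⟩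
    exact ⟨⟨x, hxs⟩, mem_interior.2
      ⟨_, fun y hy => hOA ⟨hy, y.2⟩, hO.preimage continuous_subtype_val, hxO⟩⟩

/-- Minimal sets of a self-map `F`: nonempty compact forward invariant sets in which every forward
orbit is dense. Compactness replaces closedness because the ambient space need not be compact. -/
structure IsMinimalSet {X : Type*} [TopologicalSpace X] (F : X → X) (M : Set X) : Prop where
  nonempty : M.Nonempty
  isCompact : IsCompact M
  mapsTo : MapsTo F M M
  subset_closure_orbit : ∀ x ∈ M, M ⊆ closure (range fun n => F^[n] x)

namespace IsMinimalSet

variable {X : Type*} [TopologicalSpace X] {F : X → X} {M : Set X}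

theorem image {Y : Type*} [TopologicalSpace Y] {f : Y → Y} {π : X → Y} (hM : IsMinimalSet F M)
    (hπ : Continuous π) (h : Function.Semiconj π F f) : IsMinimalSet f (π '' M) where
  nonempty := hM.nonempty.image π
  isCompact := hM.isCompact.image hπ
  mapsTo := h.mapsTo_image hM.mapsTo
  subset_closure_orbit := by
    rintro _ ⟨x, hx, rfl⟩
    calc
      π '' M ⊆ closure (π '' range fun n => F^[n] x) :=
        (image_mono (hM.subset_closure_orbit x hx)).trans (image_closure_subset_closure_image hπ)
      _ = closure (range fun n => f^[n] (π x)) := by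
        rw [← range_comp]
        exact congrArg (closure <| range ·) (funext fun n => h.iterate_right n x)

theorem exists_forall_exists_le_iterate_mem (hM : IsMinimalSet F M) (hF : Continuous F) {W : Set X}
    (hW : IsOpen W) (hne : (W ∩ M).Nonempty) : ∃ N, ∀ x ∈ M, ∃ n ≤ N, F^[n] x ∈ W := by
  obtain ⟨w, hwW, hwM⟩ := hne
  obtain ⟨t, ht⟩ := hM.isCompact.elim_finite_subcover (fun n => F^[n] ⁻¹' W)
    (fun n => hW.preimage (hF.iterate n)) fun x hx => by
      obtain ⟨_, hxW, n, rfl⟩ := mem_closure_iff.1 (hM.subset_closure_orbit x hx hwM) W hW hwW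
      exact mem_iUnion.2 ⟨n, hxW⟩
  refine ⟨t.sup id, fun x hx => ?_⟩
  obtain ⟨n, hn, hxW⟩ := mem_iUnion₂.1 (ht hx)
  exact ⟨n, Finset.le_sup (f := id) hn, hxW⟩

theorem subset_of_subset_image (hM : IsMinimalSet F M) (hF : Continuous F) {A : Set X}
    (hA : IsClosed A) (hAM : A ⊆ M) (h : M ⊆ F '' A) : M ⊆ A := by
  have long_orbit : ∀ N, ∃ x ∈ M, ∀ n < N, F^[n] x ∈ A := fun N => by
    induction N with
    | zero => exact hM.nonempty.imp fun x hx => ⟨hx, by simp⟩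
    | succ N ih =>
      obtain ⟨x, hx, hxA⟩ := ih
      obtain ⟨a, ha, rfl⟩ := h hx
      refine ⟨a, hAM ha, fun n hn => ?_⟩
      cases n with
      | zero => exact ha
      | succ n => exact hxA n (Nat.lt_of_succ_lt_succ hn)
  by_contra hMA
  obtain ⟨w, hwM, hwA⟩ := not_subset.1 hMA
  obtain ⟨N, hN⟩ := hM.exists_forall_exists_le_iterate_mem hF hA.isOpen_compl ⟨w, hwA, hwM⟩
  obtain ⟨x, hx, hxA⟩ := long_orbit (N + 1)
  obtain ⟨n, hn, hnA⟩ := hN x hx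
  exact hnA (hxA n (Nat.lt_succ_of_le hn))

variable [T2Space X]

theorem subset_of_subset_iterate_image (hM : IsMinimalSet F M) (hF : Continuous F) (n : ℕ)
    {A : Set X} (hA : IsClosed A) (hAM : A ⊆ M) (h : M ⊆ F^[n] '' A) : M ⊆ A := by
  induction n generalizing A with
  | zero => simpa using h
  | succ n ih =>
    rw [Function.iterate_succ, image_comp] at h
    exact hM.subset_of_subset_image hF hA hAM <|
      ih ((hM.isCompact.of_isClosed_subset hA hAM).image hF).isClosed
        (hM.mapsTo.mono_left hAM).image_subset h

theorem image_eq (hM : IsMinimalSet F M) (hF : Continuous F) : F '' M = M := by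
  refine hM.mapsTo.image_subset.antisymm ?_
  obtain ⟨x, hx⟩ := hM.nonempty
  refine (hM.subset_closure_orbit (F x) (hM.mapsTo hx)).trans
    (closure_minimal ?_ (hM.isCompact.image hF).isClosed)
  rintro _ ⟨n, rfl⟩
  exact ⟨F^[n] x, hM.mapsTo.iterate n hx, (Function.Commute.iterate_self F n).symm x⟩

theorem iterate_image_eq (hM : IsMinimalSet F M) (hF : Continuous F) (n : ℕ) :
    F^[n] '' M = M := by
  rw [image_iterate_eq]
  exact Function.iterate_fixed (hM.image_eq hF) n

theorem exists_mem_iterate_eq (hM : IsMinimalSet F M) (hF : Continuous F) {W : Set X}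
    (hW : IsOpen W) (hne : (W ∩ M).Nonempty) {y : X} (hy : y ∈ M) :
    ∃ n, ∃ w ∈ W ∩ M, F^[n] w = y := by
  obtain ⟨N, hN⟩ := hM.exists_forall_exists_le_iterate_mem hF hW hne
  obtain ⟨x, hx, rfl⟩ := (hM.iterate_image_eq hF N).superset hy
  obtain ⟨n, hn, hxW⟩ := hN x hx
  refine ⟨N - n, F^[n] x, ⟨hxW, hM.mapsTo.iterate n hx⟩, ?_⟩
  rw [← Function.iterate_add_apply, Nat.sub_add_cancel hn]

theorem exists_iterate_fiber_subset (hM : IsMinimalSet F M) (hF : Continuous F) (n : ℕ)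
    {W : Set X} (hW : IsOpen W) (hne : (W ∩ M).Nonempty) :
    ∃ w ∈ W ∩ M, ∀ x ∈ M, F^[n] x = F^[n] w → x ∈ W := by
  obtain ⟨v, hvW, hvM⟩ := hne
  have not_onto : ¬ M ⊆ F^[n] '' (M \ W) := fun h =>
    (hM.subset_of_subset_iterate_image hF n (hM.isCompact.isClosed.sdiff hW) sdiff_subset h
      hvM).2 hvW
  obtain ⟨y, hy, hyW⟩ := not_subset.1 not_onto
  have fiber_subset : ∀ x ∈ M, F^[n] x = y → x ∈ W := fun x hx hxy =>
    by_contra fun hxW => hyW ⟨x, ⟨hx, hxW⟩, hxy⟩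
  obtain ⟨w, hw, rfl⟩ := (hM.iterate_image_eq hF n).superset hy
  exact ⟨w, ⟨fiber_subset w hw rfl, hw⟩, fiber_subset⟩

theorem exists_isOpen_inter_subset_of_subset_iterate_image (hM : IsMinimalSet F M)
    (hF : Continuous F) (n : ℕ) {K O : Set X} (hK : IsClosed K) (hO : IsOpen O)
    (hne : (O ∩ M).Nonempty) (hOK : O ∩ M ⊆ F^[n] '' K) (hKM : K ⊆ M) :
    ∃ U, IsOpen U ∧ (U ∩ M).Nonempty ∧ U ∩ M ⊆ K := by
  have hU : IsOpen (F^[n] ⁻¹' O) := hO.preimage (hF.iterate n)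
  obtain ⟨y, hyO, hyM⟩ := hne
  obtain ⟨w, hwM, rfl⟩ := (hM.iterate_image_eq hF n).superset hyM
  refine ⟨F^[n] ⁻¹' O, hU, ⟨w, hyO, hwM⟩, ?_⟩
  have cover : M ⊆ K ∪ M \ F^[n] ⁻¹' O := by
    refine hM.subset_of_subset_iterate_image hF n (hK.union (hM.isCompact.isClosed.sdiff hU))
      (union_subset hKM sdiff_subset) fun z hz => ?_
    by_cases hzO : z ∈ O
    · exact image_mono subset_union_left (hOK ⟨hzO, hz⟩)
    · obtain ⟨x, hx, rfl⟩ := (hM.iterate_image_eq hF n).superset hz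
      exact ⟨x, Or.inr ⟨hx, hzO⟩, rfl⟩
  exact fun x hx => (cover hx.2).resolve_right fun h => h.2 hx.1

theorem exists_isOpen_inter_subset_of_subset_iUnion_iterate_image (hM : IsMinimalSet F M)
    (hF : Continuous F) {K : ℕ → Set X} (hK : ∀ n, IsClosed (K n)) (hKM : ∀ n, K n ⊆ M)
    (h : M ⊆ ⋃ n, F^[n] '' K n) : ∃ n U, IsOpen U ∧ (U ∩ M).Nonempty ∧ U ∩ M ⊆ K n := by
  have : CompactSpace M := isCompact_iff_compactSpace.1 hM.isCompact
  have : Nonempty M := hM.nonempty.to_subtype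
  have isClosed_image : ∀ n, IsClosed (F^[n] '' K n) := fun n =>
    ((hM.isCompact.of_isClosed_subset (hK n) (hKM n)).image (hF.iterate n)).isClosed
  obtain ⟨n, hn⟩ := nonempty_interior_of_iUnion_of_closed
    (f := fun n => (Subtype.val ⁻¹' (F^[n] '' K n) : Set M))
    (fun n => (isClosed_image n).preimage continuous_subtype_val)
    (by rw [← preimage_iUnion]; exact eq_univ_of_forall fun x => h x.2)
  obtain ⟨O, hO, hne, hOK⟩ := nonempty_interior_preimage_val_iff.1 hn
  exact ⟨n, hM.exists_isOpen_inter_subset_of_subset_iterate_image hF n (hK n) hO hne hOK (hKM n)⟩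

end IsMinimalSet

/-- The base points over which `M` contains the whole segment `{b} × U` and `F^[n]` collapses it to
a point; irreducibility makes such points rare. Every base point qualifies when `U` is empty. -/
def collapsedBase {Y Z : Type*} (F : Y × Z → Y × Z) (M : Set (Y × Z)) (n : ℕ) (U : Set Z) :
    Set Y :=
  {b | ∀ y ∈ U, ∀ z ∈ U, (b, y) ∈ M ∧ F^[n] (b, y) = F^[n] (b, z)}

section Collapse

variable {Y Z : Type*} {F : Y × Z → Y × Z} {M : Set (Y × Z)}

theorem collapsedBase_subset_image_fst (n : ℕ) {U : Set Z} (hU : U.Nonempty) :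
    collapsedBase F M n U ⊆ Prod.fst '' M := fun b hb =>
  let ⟨y, hy⟩ := hU
  ⟨(b, y), (hb y hy y hy).1, rfl⟩

theorem collapsedBase_anti (n : ℕ) {U U' : Set Z} (h : U ⊆ U') :
    collapsedBase F M n U' ⊆ collapsedBase F M n U := fun _ hb y hy z hz =>
  hb y (h hy) z (h hz)

variable [TopologicalSpace Y] [TopologicalSpace Z]

theorem continuous_of_semiconj_fst [Nonempty Z] {f : Y → Y} (hF : Continuous F)
    (hfF : Function.Semiconj Prod.fst F f) : Continuous f := by
  obtain ⟨z⟩ := ‹Nonempty Z›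
  have hf : f = fun b => (F (b, z)).1 := funext fun b => (hfF (b, z)).symm
  rw [hf]
  fun_prop

variable [T2Space Y] [T2Space Z]

theorem isClosed_collapsedBase (hF : Continuous F) (hM : IsClosed M) (n : ℕ) (U : Set Z) :
    IsClosed (collapsedBase F M n U) := by
  have := hF.iterate n
  simp only [collapsedBase, ofPred_forall, ofPred_and]
  refine isClosed_biInter fun y _ => isClosed_biInter fun z _ => IsClosed.inter ?_ ?_
  · exact hM.preimage (by fun_prop : Continuous fun b : Y => (b, y))
  · exact isClosed_eq (by fun_prop) (by fun_prop)

theorem IsMinimalSet.not_inter_image_fst_subset_collapsedBase (hM : IsMinimalSet F M)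
    (hF : Continuous F) (n : ℕ) {U : Set Z} (hU : IsOpen U) (hUnt : U.Nontrivial) {V : Set Y}
    (hV : IsOpen V) (hVne : (V ∩ Prod.fst '' M).Nonempty) :
    ¬ V ∩ Prod.fst '' M ⊆ collapsedBase F M n U := by
  intro hsub
  obtain ⟨s, hs, t, ht, hst⟩ := hUnt
  obtain ⟨b, hb⟩ := hVne
  obtain ⟨⟨c, y⟩, ⟨⟨hcV, hyU, -⟩, hcM⟩, fiber_subset⟩ :=
    hM.exists_iterate_fiber_subset hF n (hV.prod (hU.sdiff (isClosed_singleton (x := t))))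
      ⟨(b, s), ⟨hb.1, hs, hst⟩, (hsub hb s hs s hs).1⟩
  obtain ⟨htM, hty⟩ := hsub ⟨hcV, (c, y), hcM, rfl⟩ t ht y hyU
  exact (fiber_subset (c, t) htM hty).2.2 rfl

theorem IsMinimalSet.not_subset_iUnion_image_collapsedBase {f : Y → Y} (hM : IsMinimalSet F M)
    (hF : Continuous F) (hfF : Function.Semiconj Prod.fst F f) {U U' : Set Z} (hU : IsOpen U)
    (hUnt : U.Nontrivial) (hU' : IsOpen U') (hUnt' : U'.Nontrivial) :
    ¬ Prod.fst '' M ⊆ ⋃ n, f^[n] '' (collapsedBase F M n U ∪ collapsedBase F M n U') := by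
  intro hcover
  have : Nonempty Z := hUnt.nonempty.to_type
  have hf := continuous_of_semiconj_fst hF hfF
  have hcl := isClosed_collapsedBase hF hM.isCompact.isClosed
  obtain ⟨n, V, hV, hVne, hVsub⟩ :=
    (hM.image continuous_fst hfF).exists_isOpen_inter_subset_of_subset_iUnion_iterate_image hf
      (fun n => (hcl n U).union (hcl n U'))
      (fun n => union_subset (collapsedBase_subset_image_fst n hUnt.nonempty)
        (collapsedBase_subset_image_fst n hUnt'.nonempty)) hcover
  obtain ⟨b, hb, hbU⟩ :=
    not_subset.1 (hM.not_inter_image_fst_subset_collapsedBase hF n hU hUnt hV hVne)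
  exact hM.not_inter_image_fst_subset_collapsedBase hF n hU' hUnt' (hV.sdiff (hcl n U))
    ⟨b, ⟨hb.1, hbU⟩, hb.2⟩ fun c hc => (hVsub ⟨hc.1.1, hc.2⟩).resolve_left hc.1.2

end Collapse

section Triangular

variable {Y Z : Type*} [TopologicalSpace Y] [T2Space Y] [ConditionallyCompleteLinearOrder Z]
  [TopologicalSpace Z] [OrderTopology Z] [DenselyOrdered Z] {f : Y → Y} {F : Y × Z → Y × Z}
  {M : Set (Y × Z)}

theorem IsMinimalSet.snd_iterate_le_max (hM : IsMinimalSet F M) (hF : Continuous F)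
    (hfF : Function.Semiconj Prod.fst F f) (n : ℕ) {V : Set Y} (hV : IsOpen V) {l s r : Z}
    (hbox : (V ∩ Prod.fst '' M) ×ˢ Icc l r ⊆ M) {b : Y} (hb : b ∈ V ∩ Prod.fst '' M)
    (hs : s ∈ Icc l r) :
    (F^[n] (b, s)).2 ≤ max (F^[n] (b, l)).2 (F^[n] (b, r)).2 := by
  by_contra! hfold
  have := hF.iterate n
  obtain ⟨v, hv, hvs⟩ := exists_between hfold
  obtain ⟨t, ht, rfl⟩ := intermediate_value_Ioo hs.1 (f := fun y => (F^[n] (b, y)).2)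
    (by fun_prop) ⟨(le_max_left _ _).trans_lt hv, hvs⟩
  -- Every point of `W` in `M` has a twin between `s` and `r`.
  let W : Set (Y × Z) := V ×ˢ Ioo l s ∩
    {x | (F^[n] (x.1, r)).2 < (F^[n] x).2 ∧ (F^[n] x).2 < (F^[n] (x.1, s)).2}
  have hW : IsOpen W := (hV.prod isOpen_Ioo).inter <|
    (isOpen_lt (by fun_prop) (by fun_prop)).inter (isOpen_lt (by fun_prop) (by fun_prop))
  obtain ⟨⟨c, y⟩, ⟨⟨⟨hcV, -⟩, hry, hys⟩, hcM⟩, fiber_subset⟩ :=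
    hM.exists_iterate_fiber_subset hF n hW ⟨(b, t),
      ⟨⟨hb.1, ht⟩, (le_max_right _ _).trans_lt hv, hvs⟩, hbox ⟨hb, ht.1.le, ht.2.le.trans hs.2⟩⟩
  obtain ⟨z, hz, hzy⟩ := intermediate_value_Ioo' hs.2 (f := fun y => (F^[n] (c, y)).2)
    (by fun_prop) ⟨hry, hys⟩
  have same_fst : (F^[n] (c, z)).1 = (F^[n] (c, y)).1 :=
    (hfF.iterate_right n (c, z)).trans (hfF.iterate_right n (c, y)).symm
  have hzW := fiber_subset (c, z) (hbox ⟨⟨hcV, (c, y), hcM, rfl⟩, hs.1.trans hz.1.le, hz.2.le⟩)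
    (Prod.ext same_fst hzy)
  exact hz.1.not_gt hzW.1.2.2

theorem IsMinimalSet.mem_collapsedBase_union_of_forall_le (hM : IsMinimalSet F M)
    (hF : Continuous F) (hfF : Function.Semiconj Prod.fst F f) (n : ℕ) {V : Set Y}
    (hV : IsOpen V) {p q : Z} (hbox : (V ∩ Prod.fst '' M) ×ˢ Ioo p q ⊆ M) {c : Y}
    (hc : c ∈ V ∩ Prod.fst '' M) {s : Z} (hs : s ∈ Ioo p q)
    (hmax : ∀ y ∈ Ioo p q, (F^[n] (c, y)).2 ≤ (F^[n] (c, s)).2) :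
    c ∈ collapsedBase F M n (Ioo p s) ∪ collapsedBase F M n (Ioo s q) := by
  have mem_collapsed {U : Set Z} (hU : U ⊆ Ioo p q)
      (hge : ∀ y ∈ U, (F^[n] (c, s)).2 ≤ (F^[n] (c, y)).2) : c ∈ collapsedBase F M n U :=
    fun y hy z hz => ⟨hbox ⟨hc, hU hy⟩, Prod.ext
      ((hfF.iterate_right n (c, y)).trans (hfF.iterate_right n (c, z)).symm)
      (((hmax y (hU hy)).antisymm (hge y hy)).trans ((hmax z (hU hz)).antisymm (hge z hz)).symm)⟩
  by_cases hleft : ∀ y ∈ Ioo p s, (F^[n] (c, s)).2 ≤ (F^[n] (c, y)).2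
  · exact Or.inl (mem_collapsed (Ioo_subset_Ioo_right hs.2.le) hleft)
  · push Not at hleft
    obtain ⟨y, hy, hys⟩ := hleft
    refine Or.inr (mem_collapsed (Ioo_subset_Ioo_left hs.1.le) fun z hz => ?_)
    have no_fold := hM.snd_iterate_le_max hF hfF n hV
      ((prod_mono_right (Icc_subset_Ioo hy.1 hz.2)).trans hbox) hc ⟨hy.2.le, hz.1.le⟩
    exact (le_max_iff.1 no_fold).resolve_left hys.not_ge

theorem IsMinimalSet.subset_iUnion_image_collapsedBase_of_box_subset (hM : IsMinimalSet F M)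
    (hF : Continuous F) (hfF : Function.Semiconj Prod.fst F f) {V : Set Y} (hV : IsOpen V)
    (hVne : (V ∩ Prod.fst '' M).Nonempty) {p l r q : Z} (hpl : p < l) (hlr : l < r) (hrq : r < q)
    (hbox : (V ∩ Prod.fst '' M) ×ˢ Ioo p q ⊆ M) :
    Prod.fst '' M ⊆
      ⋃ n, f^[n] '' (collapsedBase F M n (Ioo p l) ∪ collapsedBase F M n (Ioo r q)) := by
  rintro b ⟨x, hx, hxb⟩
  obtain ⟨top, ⟨htop, rfl⟩, hmax⟩ :=
    (hM.isCompact.inter_right (isClosed_singleton.preimage continuous_fst)).exists_isMaxOn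
      ⟨x, hx, hxb⟩ continuous_snd.continuousOn
  obtain ⟨b₀, hb₀⟩ := hVne
  obtain ⟨y₀, hy₀⟩ := nonempty_Ioo.2 hlr
  obtain ⟨n, ⟨c, s⟩, ⟨⟨hcV, hs⟩, hcM⟩, rfl⟩ :=
    hM.exists_mem_iterate_eq hF (hV.prod (isOpen_Ioo (a := l) (b := r)))
      ⟨(b₀, y₀), ⟨hb₀.1, hy₀⟩, hbox ⟨hb₀, hpl.trans hy₀.1, hy₀.2.trans hrq⟩⟩ htop
  have hc : c ∈ V ∩ Prod.fst '' M := ⟨hcV, (c, s), hcM, rfl⟩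
  have hfst (y : Z) : (F^[n] (c, y)).1 = f^[n] c := hfF.iterate_right n (c, y)
  have hcollapse := hM.mem_collapsedBase_union_of_forall_le hF hfF n hV hbox hc
    ⟨hpl.trans hs.1, hs.2.trans hrq⟩ fun y hy =>
      hmax ⟨hM.mapsTo.iterate n (hbox ⟨hc, hy⟩), (hfst y).trans (hfst s).symm⟩
  exact mem_iUnion.2 ⟨n, c, union_subset_union
    (collapsedBase_anti n (Ioo_subset_Ioo_right hs.1.le))
    (collapsedBase_anti n (Ioo_subset_Ioo_left hs.2.le)) hcollapse, (hfst s).symm⟩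

theorem IsMinimalSet.not_box_subset (hM : IsMinimalSet F M) (hF : Continuous F)
    (hfF : Function.Semiconj Prod.fst F f) {V : Set Y} (hV : IsOpen V)
    (hVne : (V ∩ Prod.fst '' M).Nonempty) {p q : Z} (hpq : p < q) :
    ¬ (V ∩ Prod.fst '' M) ×ˢ Ioo p q ⊆ M := by
  intro hbox
  obtain ⟨l, hpl, hlq⟩ := exists_between hpq
  obtain ⟨r, hlr, hrq⟩ := exists_between hlq
  exact hM.not_subset_iUnion_image_collapsedBase hF hfF isOpen_Ioo (Ioo_infinite hpl).nontrivial
    isOpen_Ioo (Ioo_infinite hrq).nontrivial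
    (hM.subset_iUnion_image_collapsedBase_of_box_subset hF hfF hV hVne hpl hlr hrq hbox)

theorem minimal_set_of_triangular_map_nowhere_dense_in_proj_cylinder_general [Nontrivial Z]
    (hM : IsMinimalSet F M) (hF : Continuous F) (hfF : Function.Semiconj Prod.fst F f) :
    interior {q : ↥((Prod.fst '' M) ×ˢ (Set.univ : Set Z)) | (q : Y × Z) ∈ M} = ∅ := by
  by_contra hne
  obtain ⟨O, hO, ⟨⟨b, y⟩, hbyO, hb, -⟩, hOM⟩ :=
    nonempty_interior_preimage_val_iff.1 (nonempty_iff_ne_empty.2 hne)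
  obtain ⟨V, J, hV, hJ, hbV, hyJ, hVJ⟩ := isOpen_prod_iff.1 hO b y hbyO
  obtain ⟨p, q, hpq, hpqJ⟩ := hJ.exists_Ioo_subset ⟨y, hyJ⟩
  exact hM.not_box_subset hF hfF hV ⟨b, hbV, hb⟩ hpq fun x hx =>
    hOM ⟨hVJ ⟨hx.1.1, hpqJ hx.2⟩, hx.1.2, mem_univ x.2⟩

end Triangular

/-- A minimal set `M` of a continuous triangular map of the unit square
is nowhere dense (equivalently, since `M` is closed, has empty interior) in the
subspace `pr₁(M) × I` of `I × I`. -/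
theorem minimal_set_of_triangular_map_nowhere_dense_in_proj_cylinder
    (f : I → I) (g : I × I → I) (hf : Continuous f) (hg : Continuous g)
    (F : I × I → I × I) (hF : ∀ p, F p = (f p.1, g p))
    (M : Set (I × I)) (hMne : M.Nonempty) (hMcl : IsClosed M)
    (hMinv : Set.MapsTo F M M)
    (hMmin : ∀ p ∈ M, M ⊆ closure (Set.range fun n => F^[n] p)) :
    interior {q : ↥((Prod.fst '' M) ×ˢ (Set.univ : Set I)) | (q : I × I) ∈ M} = ∅ :=
  have hFc : Continuous F := by
    rw [funext hF]
    fun_prop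
  minimal_set_of_triangular_map_nowhere_dense_in_proj_cylinder_general
    ⟨hMne, hMcl.isCompact, hMinv, hMmin⟩ hFc fun p => congrArg Prod.fst (hF p)
end

section
/- Let B be a nonempty compact metric space, f : B → B a continuous minimal map, S¹ = ℝ/ℤ the circle, and F : B × S¹ → B × S¹ a continuous map of the form F(b, y) = (f(b), g(b, y)) with g : B × S¹ → S¹ continuous. If M is a minimal set of F, then either M is nowhere dense in B × S¹ or M = B × S¹. -/
open Set Topology

/-!
Call a map irreducible on `S` if every open set meeting `S` contains a whole nonempty fibre of its
restriction to `S`. The restriction of a map to a compact minimal set is irreducible. Hence, for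
`a` in a residual set of base points, `f` is injective at `a` and the fibre map over `a` is
irreducible on the interior of the fibre `M_a`. An irreducible map between circles has no local
extrema, so it is open. The fibre map over such an `a` therefore sends the interior of `M_a` into
the interior of `M_{f a}`, so every boundary point of `M_{f a}` comes from a boundary point of
`M_a`. If some fibre of `M` is not the whole circle, there are then arbitrarily long orbit segments
inside the boundaries of fibres, hence outside the interior of `M`. As the hitting times of a
nonempty open subset of `M` are bounded, the interior of `M` is empty.
-/

section Irreducible

variable {X Y Z : Type*} [TopologicalSpace X] {φ : X → Y} {S : Set X}

/-- `φ` is irreducible on `S`: every open set meeting `S` contains a whole nonempty fibre of `φ|S`.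
Equivalently, no proper relatively closed subset of `S` has image `φ(S)`. -/
def IrreducibleOn (φ : X → Y) (S : Set X) : Prop :=
  ∀ W, IsOpen W → (S ∩ W).Nonempty → ∃ x ∈ S ∩ W, ∀ x' ∈ S, φ x' = φ x → x' ∈ W

namespace IrreducibleOn

theorem mono_of_isOpen (h : IrreducibleOn φ S) {U : Set X} (hU : IsOpen U) (hUS : U ⊆ S) :
    IrreducibleOn φ U := by
  intro W hW hne
  obtain ⟨x, ⟨-, hx⟩, hfib⟩ := h (U ∩ W) (hU.inter hW) (hne.mono fun y hy => ⟨hUS hy.1, hy⟩)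
  exact ⟨x, hx, fun x' hx' heq => (hfib x' (hUS hx') heq).2⟩

theorem comp_injOn (h : IrreducibleOn φ S) {ψ : Y → Z} (hψ : InjOn ψ (φ '' S)) :
    IrreducibleOn (ψ ∘ φ) S := by
  intro W hW hne
  obtain ⟨x, hx, hfib⟩ := h W hW hne
  exact ⟨x, hx, fun x' hx' heq =>
    hfib x' hx' (hψ (mem_image_of_mem φ hx') (mem_image_of_mem φ hx.1) heq)⟩

theorem comp_openPartialHomeomorph [TopologicalSpace Z] (h : IrreducibleOn φ S)
    (e : OpenPartialHomeomorph Z X) (hS : S ⊆ e.target) :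
    IrreducibleOn (φ ∘ e) (e.source ∩ e ⁻¹' S) := by
  intro W hW ⟨z, ⟨hz, hzS⟩, hzW⟩
  obtain ⟨x, ⟨hxS, hxW⟩, hfib⟩ := h (e.target ∩ e.symm ⁻¹' W) (e.isOpen_inter_preimage_symm hW)
    ⟨e z, hzS, e.map_source hz, by rwa [mem_preimage, e.left_inv hz]⟩
  have hex : e (e.symm x) = x := e.right_inv (hS hxS)
  refine ⟨e.symm x, ⟨⟨e.map_target (hS hxS), by rwa [mem_preimage, hex]⟩, hxW.2⟩, ?_⟩
  intro z' ⟨hz', hz'S⟩ heq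
  have := (hfib (e z') hz'S (by simpa only [Function.comp_apply, hex] using heq)).2
  rwa [mem_preimage, e.left_inv hz'] at this

end IrreducibleOn

theorem eventually_residual_mem_interior_of_isClosed {C : Set X} (hC : IsClosed C) :
    ∀ᶠ a in residual X, a ∈ C → a ∈ interior C := by
  filter_upwards [residual_of_dense_open isClosed_frontier.isOpen_compl
    (interior_eq_empty_iff_dense_compl.1 (interior_frontier hC))] with a ha haC
  by_contra hint
  exact ha (hC.frontier_eq ▸ ⟨haC, hint⟩)

namespace IrreducibleOn

variable [TopologicalSpace Y]

theorem tendsto_residual (h : IrreducibleOn φ univ) (hφ : Continuous φ) (hcl : IsClosedMap φ)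
    (hsurj : Function.Surjective φ) :
    Filter.Tendsto φ (residual X) (residual Y) := by
  refine Filter.le_countableGenerate_iff_of_countableInterFilter.2 ?_
  rintro D ⟨hDo, hDd⟩
  refine residual_of_dense_open (hDo.preimage hφ) (dense_iff_inter_open.2 fun W hW hne => ?_)
  obtain ⟨x, -, hfib⟩ := h W hW (by rwa [univ_inter])
  obtain ⟨y, hyW, hyD⟩ := hDd.inter_open_nonempty _ (hcl _ hW.isClosed_compl).isOpen_compl
    ⟨φ x, fun ⟨x', hx', heq⟩ => hx' (hfib x' (mem_univ x') heq)⟩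
  obtain ⟨x', rfl⟩ := hsurj y
  exact ⟨x', by_contra fun hx' => hyW ⟨x', hx', rfl⟩, hyD⟩

theorem eventually_residual_injective_at [T1Space X] [SecondCountableTopology X]
    (h : IrreducibleOn φ univ) (hφ : Continuous φ) (hcl : IsClosedMap φ) :
    ∀ᶠ a in residual X, ∀ a', φ a' = φ a → a' = a := by
  have hbasis := TopologicalSpace.isBasis_countableBasis X
  have hclosed (Q) (hQ : Q ∈ TopologicalSpace.countableBasis X) : IsClosed (φ ⁻¹' (φ '' Qᶜ)) :=
    (hcl _ (hbasis.isOpen hQ).isClosed_compl).preimage hφ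
  filter_upwards [(eventually_countable_ball (TopologicalSpace.countable_countableBasis X)).2
    fun Q hQ => eventually_residual_mem_interior_of_isClosed (hclosed Q hQ)] with a ha a' heq
  by_contra hne
  obtain ⟨Q, hQ, haQ, hQa'⟩ :=
    hbasis.exists_subset_of_mem_open (u := {a'}ᶜ) (Ne.symm hne) isOpen_compl_singleton
  have haint : a ∈ interior (φ ⁻¹' (φ '' Qᶜ)) :=
    ha Q hQ ⟨a', fun ha'Q => hQa' ha'Q rfl, heq⟩
  obtain ⟨x, ⟨-, hxint, -⟩, hfib⟩ :=
    h _ (isOpen_interior.inter (hbasis.isOpen hQ)) ⟨a, mem_univ a, haint, haQ⟩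
  obtain ⟨x', hx'Q, hx'⟩ := interior_subset hxint
  exact hx'Q (hfib x' (mem_univ x') hx').2

theorem eventually_residual_slice [SecondCountableTopology Y] [CompactSpace Y] [TopologicalSpace Z]
    [T2Space Z] {G : X × Y → Z} {M : Set (X × Y)} (h : IrreducibleOn G M) (hG : Continuous G)
    (hM : IsClosed M) :
    ∀ᶠ a in residual X, IrreducibleOn (fun y => G (a, y)) (interior (Prod.mk a ⁻¹' M)) := by
  have hbasis := TopologicalSpace.isBasis_countableBasis Y
  -- `C Q`: the points `a` with `Q ⊆ M_a` such that `Q` contains no whole fibre of `G(a, ·)|M_a`.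
  let C (Q : Set Y) : Set X := ⋂ y ∈ Q,
    (·, y) ⁻¹' M ∩ Prod.fst '' {p : X × Y | p.2 ∉ Q ∧ p ∈ M ∧ G p = G (p.1, y)}
  have hclosed (Q) (hQ : Q ∈ TopologicalSpace.countableBasis Y) : IsClosed (C Q) := by
    refine isClosed_biInter fun y _ => (hM.preimage (by fun_prop)).inter
      (isClosedMap_fst_of_compactSpace _ ?_)
    exact ((hbasis.isOpen hQ).isClosed_compl.preimage continuous_snd).inter
      (hM.inter (isClosed_eq hG (by fun_prop)))
  filter_upwards [(eventually_countable_ball (TopologicalSpace.countable_countableBasis Y)).2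
    fun Q hQ => eventually_residual_mem_interior_of_isClosed (hclosed Q hQ)] with a ha
  intro W hW ⟨y₀, hy₀⟩
  obtain ⟨Q, hQ, hy₀Q, hQsub⟩ :=
    hbasis.exists_subset_of_mem_open hy₀ (isOpen_interior.inter hW)
  have hsub : interior (Prod.mk a ⁻¹' M) ⊆ Prod.mk a ⁻¹' M := interior_subset
  have haC : a ∉ C Q := by
    intro haC
    obtain ⟨⟨b, y⟩, ⟨-, hb, hy⟩, hfib⟩ := h _ (isOpen_interior.prod (hbasis.isOpen hQ))
      ⟨(a, y₀), hsub hy₀.1, ha Q hQ haC, hy₀Q⟩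
    obtain ⟨-, ⟨_, y'⟩, ⟨hy', hy'M, heq⟩, rfl⟩ := mem_iInter₂.1 (interior_subset hb) y hy
    exact hy' (hfib _ hy'M heq).2
  obtain ⟨y, hy, hfib⟩ : ∃ y ∈ Q, ∀ y', (a, y') ∈ M → G (a, y') = G (a, y) → y' ∈ Q := by
    by_contra! hcon
    refine haC (mem_iInter₂.2 fun y hy => ⟨hsub (hQsub hy).1, ?_⟩)
    obtain ⟨y', hy'M, heq, hy'⟩ := hcon y hy
    exact ⟨(a, y'), ⟨hy', hy'M, heq⟩, rfl⟩
  exact ⟨y, hQsub hy, fun y' hy' heq => (hQsub (hfib y' (hsub hy') heq)).2⟩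

end IrreducibleOn

end Irreducible

theorem exists_forall_iterate_mem_of_subset_image {X : Type*} {T : X → X} {A : ℕ → Set X}
    (hA : ∀ i, A (i + 1) ⊆ T '' A i) (n : ℕ) :
    ∀ z ∈ A n, ∃ p, T^[n] p = z ∧ ∀ i ≤ n, T^[i] p ∈ A i := by
  induction n with
  | zero =>
    intro z hz
    exact ⟨z, rfl, fun i hi => by simpa [Nat.le_zero.1 hi] using hz⟩
  | succ n ih =>
    intro z hz
    obtain ⟨w, hw, rfl⟩ := hA n hz
    obtain ⟨p, rfl, hp⟩ := ih w hw
    have hlast := Function.iterate_succ_apply' T n p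
    refine ⟨p, hlast, fun i hi => ?_⟩
    rcases hi.lt_or_eq with hlt | rfl
    · exact hp i (Nat.lt_succ_iff.1 hlt)
    · rwa [hlast]

section Minimal

variable {X : Type*} [TopologicalSpace X] {T : X → X} {M : Set X}

/-- `M` is a minimal set of `T`: a nonempty closed set, mapped into itself by `T`, in which every
forward orbit is dense. -/
structure IsMinimalSet_s1 (T : X → X) (M : Set X) : Prop where
  nonempty : M.Nonempty
  isClosed : IsClosed M
  mapsTo : MapsTo T M M
  subset_closure_orbit : ∀ p ∈ M, M ⊆ closure (range fun n => T^[n] p)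

namespace IsMinimalSet_s1

theorem subset_of_mapsTo (hM : IsMinimalSet_s1 T M) {A : Set X} (hA : IsClosed A)
    (hTA : MapsTo T A A) (hne : (M ∩ A).Nonempty) : M ⊆ A := by
  obtain ⟨p, hpM, hpA⟩ := hne
  refine (hM.subset_closure_orbit p hpM).trans (closure_minimal ?_ hA)
  exact range_subset_iff.2 fun n => hTA.iterate n hpA

variable [CompactSpace X]

theorem exists_hitting_time_bound (hM : IsMinimalSet_s1 T M) (hT : Continuous T) {O : Set X}
    (hO : IsOpen O) (hne : (M ∩ O).Nonempty) : ∃ N : ℕ, ∀ p ∈ M, ∃ n ≤ N, T^[n] p ∈ O := by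
  obtain ⟨x, hxM, hxO⟩ := hne
  have hcover : M ⊆ ⋃ n : ℕ, T^[n] ⁻¹' O := by
    intro p hp
    obtain ⟨_, hy, n, rfl⟩ := mem_closure_iff.1 (hM.subset_closure_orbit p hp hxM) O hO hxO
    exact mem_iUnion.2 ⟨n, hy⟩
  obtain ⟨t, ht⟩ :=
    hM.isClosed.isCompact.elim_finite_subcover _ (fun n => hO.preimage (hT.iterate n)) hcover
  refine ⟨t.sup id, fun p hp => ?_⟩
  obtain ⟨n, hn, hpn⟩ := mem_iUnion₂.1 (ht hp)
  exact ⟨n, Finset.le_sup (f := id) hn, hpn⟩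

theorem subset_closure_of_orbit_segments (hM : IsMinimalSet_s1 T M) (hT : Continuous T) {A : Set X}
    (hA : ∀ n, ∃ p ∈ M, ∀ i ≤ n, T^[i] p ∈ A) : M ⊆ closure A := by
  intro x hxM
  by_contra hx
  obtain ⟨N, hN⟩ := hM.exists_hitting_time_bound hT isClosed_closure.isOpen_compl ⟨x, hxM, hx⟩
  obtain ⟨p, hpM, hpA⟩ := hA N
  obtain ⟨n, hn, hnA⟩ := hN p hpM
  exact hnA (subset_closure (hpA n hn))

theorem image_eq_s1 [T2Space X] (hM : IsMinimalSet_s1 T M) (hT : Continuous T) : T '' M = M := by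
  refine hM.mapsTo.image_subset.antisymm (hM.subset_of_mapsTo ?_ ?_ ?_)
  · exact (hM.isClosed.isCompact.image hT).isClosed
  · exact (mapsTo_image T M).mono_left hM.mapsTo.image_subset
  · exact (hM.nonempty.image T).mono fun x hx => ⟨hM.mapsTo.image_subset hx, hx⟩

theorem irreducibleOn [T2Space X] (hM : IsMinimalSet_s1 T M) (hT : Continuous T) :
    IrreducibleOn T M := by
  intro W hW hne
  by_contra! hcon
  have hlift : M ⊆ T '' (M \ W) := by
    intro z hz
    obtain ⟨x, hx, rfl⟩ := (hM.image_eq_s1 hT).ge hz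
    by_cases hxW : x ∈ W
    · obtain ⟨x', hx', heq, hx'W⟩ := hcon x ⟨hx, hxW⟩
      exact ⟨x', ⟨hx', hx'W⟩, heq⟩
    · exact ⟨x, ⟨hx, hxW⟩, rfl⟩
  obtain ⟨z, hz, -⟩ := image_nonempty.1 (hM.nonempty.mono hlift)
  obtain ⟨w, hw, -⟩ := hlift hz
  have hdense : M ⊆ closure Wᶜ := hM.subset_closure_of_orbit_segments hT fun n => by
    obtain ⟨p, -, hp⟩ := exists_forall_iterate_mem_of_subset_image
      (A := fun _ => M \ W) (fun _ => sdiff_subset.trans hlift) n w hw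
    exact ⟨p, (hp 0 n.zero_le).1, fun i hi => (hp i hi).2⟩
  rw [hW.isClosed_compl.closure_eq] at hdense
  obtain ⟨x, hxM, hxW⟩ := hne
  exact hdense hxM hxW

theorem surjective [T2Space X] (h : IsMinimalSet_s1 T univ) (hT : Continuous T) :
    Function.Surjective T := by
  rw [← range_eq_univ, ← image_univ, h.image_eq_s1 hT]

end IsMinimalSet_s1

end Minimal

section LinearOrder

variable {α β : Type*} [ConditionallyCompleteLinearOrder α] [DenselyOrdered α] [NoMinOrder α]
  [NoMaxOrder α] [TopologicalSpace α] [OrderTopology α] [LinearOrder β] [TopologicalSpace β]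
  [OrderTopology β] {φ : α → β} {S : Set α} {x : α}

theorem image_mem_nhds_of_not_isLocalExtr (hφ : ContinuousOn φ S)
    (hS : S ∈ 𝓝 x) (hmax : ¬IsLocalMax φ x) (hmin : ¬IsLocalMin φ x) : φ '' S ∈ 𝓝 (φ x) := by
  obtain ⟨l, r, hx, hI⟩ := mem_nhds_iff_exists_Ioo_subset.1 hS
  have hnhds : Ioo l r ∈ 𝓝 x := Ioo_mem_nhds hx.1 hx.2
  obtain ⟨u, hu, hxu⟩ : ∃ u ∈ Ioo l r, φ x < φ u := by
    by_contra! hle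
    exact hmax (Filter.mem_of_superset hnhds hle)
  obtain ⟨v, hv, hvx⟩ : ∃ v ∈ Ioo l r, φ v < φ x := by
    by_contra! hle
    exact hmin (Filter.mem_of_superset hnhds hle)
  refine Filter.mem_of_superset (Icc_mem_nhds hvx hxu) (subset_trans ?_ (image_mono hI))
  exact (isPreconnected_Ioo.image φ (hφ.mono hI)).Icc_subset (mem_image_of_mem φ hv)
    (mem_image_of_mem φ hu)

namespace IrreducibleOn

theorem not_isLocalMax (h : IrreducibleOn φ S) (hφ : ContinuousOn φ S)
    (hS : S ∈ 𝓝 x) : ¬IsLocalMax φ x := by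
  intro hmax
  obtain ⟨l, r, hx, hI⟩ := mem_nhds_iff_exists_Ioo_subset.1 (Filter.inter_mem hS hmax)
  obtain ⟨p, hp, hpx⟩ : ∃ p ∈ Ioo l x, φ p < φ x := by
    by_contra! hge
    have hsub : Ioo l x ⊆ Ioo l r := Ioo_subset_Ioo_right hx.2.le
    obtain ⟨p, hp⟩ := nonempty_Ioo.2 hx.1
    obtain ⟨s, ⟨-, hs⟩, hfib⟩ := h _ isOpen_Ioo ⟨p, (hI (hsub hp)).1, hp⟩
    have heq : φ x = φ s := (hge s hs).antisymm (hI (hsub hs)).2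
    exact (hfib x (hI hx).1 heq).2.false
  obtain ⟨l', q, hxq, hq⟩ := mem_nhds_iff_exists_Ioo_subset.1 (Filter.inter_mem
    (Ioo_mem_nhds hx.1 hx.2) ((hφ.continuousAt hS).eventually (lt_mem_nhds hpx)))
  have hq' : ∀ s ∈ Ioo x q, s ∈ Ioo l r ∧ φ p < φ s :=
    fun s hs => hq ⟨hxq.1.trans hs.1, hs.2⟩
  obtain ⟨s₀, hs₀⟩ := nonempty_Ioo.2 hxq.2
  obtain ⟨s, ⟨-, hs⟩, hfib⟩ := h _ isOpen_Ioo ⟨s₀, (hI (hq' s₀ hs₀).1).1, hs₀⟩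
  have hsub : Icc p x ⊆ S := fun t ht => (hI ⟨hp.1.trans_le ht.1, ht.2.trans_lt hx.2⟩).1
  obtain ⟨t, ht, hts⟩ := intermediate_value_Icc hp.2.le (hφ.mono hsub)
    ⟨(hq' s hs).2.le, (hI (hq' s hs).1).2⟩
  exact (hfib t (hsub ht) hts).1.not_ge ht.2

theorem not_isLocalMin (h : IrreducibleOn φ S) (hφ : ContinuousOn φ S)
    (hS : S ∈ 𝓝 x) : ¬IsLocalMin φ x :=
  not_isLocalMax (β := βᵒᵈ) h hφ hS

theorem image_mem_nhds (h : IrreducibleOn φ S) (hφ : ContinuousOn φ S)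
    (hS : S ∈ 𝓝 x) : φ '' S ∈ 𝓝 (φ x) :=
  image_mem_nhds_of_not_isLocalExtr hφ hS (h.not_isLocalMax hφ hS) (h.not_isLocalMin hφ hS)

theorem image_mem_nhds_of_charts {Y Z : Type*} [TopologicalSpace Y]
    [TopologicalSpace Z] {ψ : Y → Z} {U : Set Y} {y : Y} (h : IrreducibleOn ψ U)
    (hψ : Continuous ψ) (hU : U ∈ 𝓝 y) (e : OpenPartialHomeomorph α Y)
    (e' : OpenPartialHomeomorph β Z) (hy : y ∈ e.target) (hψy : ψ y ∈ e'.target) :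
    ψ '' U ∈ 𝓝 (ψ y) := by
  set V : Set Y := interior U ∩ e.target ∩ ψ ⁻¹' e'.target
  have hVo : IsOpen V :=
    (isOpen_interior.inter e.open_target).inter (e'.open_target.preimage hψ)
  have hyV : y ∈ V := ⟨⟨mem_interior_iff_mem_nhds.2 hU, hy⟩, hψy⟩
  have hVU : V ⊆ U := fun z hz => interior_subset hz.1.1
  have hirr : IrreducibleOn (e'.symm ∘ ψ ∘ e) (e.source ∩ e ⁻¹' V) := by
    have hψV : ψ '' V ⊆ e'.target := image_subset_iff.2 fun z hz => hz.2
    have hψirr := (h.mono_of_isOpen hVo hVU).comp_injOn (e'.symm.injOn.mono hψV)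
    exact hψirr.comp_openPartialHomeomorph e fun z hz => hz.1.2
  have hcont : ContinuousOn (e'.symm ∘ ψ ∘ e) (e.source ∩ e ⁻¹' V) :=
    e'.continuousOn_symm.comp (hψ.comp_continuousOn (e.continuousOn.mono inter_subset_left))
      fun t ht => ht.2.2
  have hey : e (e.symm y) = y := e.right_inv hy
  have hnhds : e.source ∩ e ⁻¹' V ∈ 𝓝 (e.symm y) :=
    (e.isOpen_inter_preimage hVo).mem_nhds ⟨e.map_target hy, by rwa [mem_preimage, hey]⟩
  have himage := e'.image_mem_nhds (e'.map_target hψy)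
    (by simpa only [Function.comp_apply, hey] using hirr.image_mem_nhds hcont hnhds)
  rw [e'.right_inv hψy] at himage
  refine Filter.mem_of_superset himage ?_
  rintro _ ⟨_, ⟨t, ⟨-, ht⟩, rfl⟩, rfl⟩
  exact ⟨e t, hVU ht, (e'.right_inv ht.2).symm⟩

end IrreducibleOn

end LinearOrder

section Circle

variable {p q : ℝ} [Fact (0 < p)] [Fact (0 < q)]

theorem exists_addCircle_chart (x : AddCircle p) :
    ∃ e : OpenPartialHomeomorph ℝ (AddCircle p), x ∈ e.target := by
  obtain ⟨c, rfl⟩ := QuotientAddGroup.mk_surjective x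
  let e := AddCircle.openPartialHomeomorphCoe p (c - p / 2)
  have hp : 0 < p := Fact.out
  exact ⟨e, e.map_source ⟨by linarith, by linarith⟩⟩

theorem IrreducibleOn.isOpen_image_addCircle {φ : AddCircle p → AddCircle q}
    {U : Set (AddCircle p)} (h : IrreducibleOn φ U) (hφ : Continuous φ) (hU : IsOpen U) :
    IsOpen (φ '' U) := by
  refine isOpen_iff_mem_nhds.2 (forall_mem_image.2 fun x hx => ?_)
  obtain ⟨e, he⟩ := exists_addCircle_chart x
  obtain ⟨e', he'⟩ := exists_addCircle_chart (φ x)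
  exact h.image_mem_nhds_of_charts hφ (hU.mem_nhds hx) e e' he he'

end Circle

section SkewProduct

variable {B Y : Type*} [TopologicalSpace Y] {f : B → B} {F : B × Y → B × Y}
  {M : Set (B × Y)}

/-- The topological boundary, within the fibre `Y` over `a`, of the fibre of `M` over `a`, viewed
as a subset of the total space. -/
def fibreFrontier (M : Set (B × Y)) (a : B) : Set (B × Y) :=
  Prod.mk a '' frontier (Prod.mk a ⁻¹' M)

theorem fibreFrontier_nonempty [PreconnectedSpace Y] {a : B} (hne : (Prod.mk a ⁻¹' M).Nonempty)
    (huniv : Prod.mk a ⁻¹' M ≠ univ) : (fibreFrontier M a).Nonempty :=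
  (nonempty_frontier_iff.2 ⟨hne, huniv⟩).image _

variable [TopologicalSpace B]

theorem fibreFrontier_subset (hM : IsClosed M) (a : B) : fibreFrontier M a ⊆ M :=
  image_subset_iff.2 (hM.preimage (Continuous.prodMk_right a)).frontier_subset

theorem fibreFrontier_subset_compl_interior (M : Set (B × Y)) (a : B) :
    fibreFrontier M a ⊆ (interior M)ᶜ :=
  image_subset_iff.2 fun _ hy hyM =>
    hy.2 (preimage_interior_subset_interior_preimage (Continuous.prodMk_right a) hyM)

theorem fibreFrontier_subset_image (hfF : Function.Semiconj Prod.fst F f) (hM : IsClosed M)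
    (hFM : F '' M = M) {a : B} (ha : ∀ a', f a' = f a → a' = a)
    (hopen : IsOpen ((fun y => (F (a, y)).2) '' interior (Prod.mk a ⁻¹' M))) :
    fibreFrontier M (f a) ⊆ F '' fibreFrontier M a := by
  rintro _ ⟨y, hy, rfl⟩
  have hyM : (f a, y) ∈ M := fibreFrontier_subset hM (f a) (mem_image_of_mem _ hy)
  obtain ⟨⟨a', x⟩, hxM, hx⟩ := hFM.ge hyM
  obtain rfl : a' = a := ha a' (by rw [← hfF (a', x), hx])
  refine ⟨(a', x), mem_image_of_mem _ ⟨subset_closure hxM, fun hxint => hy.2 ?_⟩, hx⟩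
  refine interior_maximal ?_ hopen ⟨x, hxint, congrArg Prod.snd hx⟩
  rintro _ ⟨x', hx', rfl⟩
  have hx'M : x' ∈ Prod.mk a' ⁻¹' M := interior_subset hx'
  have hFx' : F (a', x') ∈ M := hFM.le (mem_image_of_mem F hx'M)
  rwa [mem_preimage, ← hfF (a', x')]

variable [CompactSpace Y]

theorem IsMinimalSet_s1.image_fst_eq_univ (hM : IsMinimalSet_s1 F M) (hf : IsMinimalSet_s1 f univ)
    (hfF : Function.Semiconj Prod.fst F f) : Prod.fst '' M = univ := by
  refine univ_subset_iff.1 (hf.subset_of_mapsTo ?_ ?_ ?_)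
  · exact isClosedMap_fst_of_compactSpace _ hM.isClosed
  · rintro _ ⟨p, hp, rfl⟩
    exact ⟨F p, hM.mapsTo hp, hfF p⟩
  · simpa only [univ_inter] using hM.nonempty.image Prod.fst

variable [CompactSpace B] [T2Space B] [SecondCountableTopology B] [T2Space Y]
  [SecondCountableTopology Y]

theorem IsMinimalSet_s1.eventually_residual_fibreFrontier_subset_image (hM : IsMinimalSet_s1 F M)
    (hF : Continuous F) (hf : IsMinimalSet_s1 f univ) (hfc : Continuous f)
    (hfF : Function.Semiconj Prod.fst F f)
    (hY : ∀ φ : Y → Y, Continuous φ → ∀ U, IsOpen U → IrreducibleOn φ U → IsOpen (φ '' U)) :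
    ∀ᶠ a in residual B, fibreFrontier M (f a) ⊆ F '' fibreFrontier M a := by
  filter_upwards [(hf.irreducibleOn hfc).eventually_residual_injective_at hfc hfc.isClosedMap,
    (hM.irreducibleOn hF).eventually_residual_slice hF hM.isClosed] with a hinj hirr
  refine fibreFrontier_subset_image hfF hM.isClosed (hM.image_eq_s1 hF) hinj
    (hY _ (by fun_prop) _ isOpen_interior (hirr.comp_injOn (ψ := Prod.snd) ?_))
  rintro _ ⟨y, -, rfl⟩ _ ⟨y', -, rfl⟩ heq
  exact Prod.ext ((hfF (a, y)).trans (hfF (a, y')).symm) heq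

theorem IsMinimalSet_s1.exists_orbit_segment_notMem_interior [PreconnectedSpace Y]
    (hM : IsMinimalSet_s1 F M) (hF : Continuous F) (hf : IsMinimalSet_s1 f univ) (hfc : Continuous f)
    (hfF : Function.Semiconj Prod.fst F f)
    (hY : ∀ φ : Y → Y, Continuous φ → ∀ U, IsOpen U → IrreducibleOn φ U → IsOpen (φ '' U))
    (hne : M ≠ univ) (n : ℕ) : ∃ p ∈ M, ∀ i ≤ n, F^[i] p ∈ (interior M)ᶜ := by
  obtain ⟨⟨b₀, y₀⟩, hby⟩ := (ne_univ_iff_exists_notMem M).1 hne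
  have hsurj := hf.surjective hfc
  have hres := (hf.irreducibleOn hfc).tendsto_residual hfc hfc.isClosedMap hsurj
  have hlift : ∀ᶠ a in residual B, ∀ i,
      fibreFrontier M (f (f^[i] a)) ⊆ F '' fibreFrontier M (f^[i] a) :=
    eventually_countable_forall.2 fun i => (hres.iterate i).eventually
      (hM.eventually_residual_fibreFrontier_subset_image hF hf hfc hfF hY)
  have hVo : IsOpen {b | (b, y₀) ∉ M} :=
    hM.isClosed.isOpen_compl.preimage (Continuous.prodMk_left y₀)
  obtain ⟨a, haV, ha⟩ := (dense_of_mem_residual hlift).inter_open_nonempty _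
    (hVo.preimage (hfc.iterate n)) (Nonempty.preimage ⟨b₀, hby⟩ (hsurj.iterate n))
  have hslice : (Prod.mk (f^[n] a) ⁻¹' M).Nonempty := by
    obtain ⟨⟨b, y⟩, hyM, hb⟩ := (hM.image_fst_eq_univ hf hfF).ge (mem_univ (f^[n] a))
    exact ⟨y, by rwa [mem_preimage, ← hb]⟩
  obtain ⟨z, hz⟩ := fibreFrontier_nonempty hslice fun h => haV (h.ge (mem_univ y₀))
  obtain ⟨p, -, hp⟩ := exists_forall_iterate_mem_of_subset_image
    (A := fun i => fibreFrontier M (f^[i] a))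
    (fun i => by simpa only [Function.iterate_succ_apply'] using ha i) n z hz
  exact ⟨p, fibreFrontier_subset hM.isClosed a (hp 0 n.zero_le),
    fun i hi => fibreFrontier_subset_compl_interior M _ (hp i hi)⟩

theorem minimal_set_of_skew_product_on_circle_nowhere_dense_or_all_general [PreconnectedSpace Y]
    (hM : IsMinimalSet_s1 F M) (hF : Continuous F) (hf : IsMinimalSet_s1 f univ) (hfc : Continuous f)
    (hfF : Function.Semiconj Prod.fst F f)
    (hY : ∀ φ : Y → Y, Continuous φ → ∀ U, IsOpen U → IrreducibleOn φ U → IsOpen (φ '' U)) :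
    IsNowhereDense M ∨ M = univ := by
  refine or_iff_not_imp_right.2 fun hne => hM.isClosed.isNowhereDense_iff.2 ?_
  have hdense : M ⊆ closure (interior M)ᶜ := hM.subset_closure_of_orbit_segments hF
    (hM.exists_orbit_segment_notMem_interior hF hf hfc hfF hY hne)
  rw [isOpen_interior.isClosed_compl.closure_eq] at hdense
  exact eq_empty_of_forall_notMem fun p hp => hdense (interior_subset hp) hp

end SkewProduct

/-- A minimal set of a fibre-preserving (skew product) continuous map of
`B × S¹` over a minimal base is nowhere dense or the whole space. -/
theorem minimal_set_of_skew_product_on_circle_nowhere_dense_or_all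
    {B : Type*} [MetricSpace B] [CompactSpace B] [Nonempty B]
    (f : B → B) (hf : Continuous f)
    (hfmin : ∀ b : B, Dense (Set.range fun n => f^[n] b))
    (g : B × AddCircle (1 : ℝ) → AddCircle (1 : ℝ)) (hg : Continuous g)
    (F : B × AddCircle (1 : ℝ) → B × AddCircle (1 : ℝ)) (hF : ∀ p, F p = (f p.1, g p))
    (M : Set (B × AddCircle (1 : ℝ))) (hMne : M.Nonempty) (hMcl : IsClosed M)
    (hMinv : Set.MapsTo F M M)
    (hMmin : ∀ p ∈ M, M ⊆ closure (Set.range fun n => F^[n] p)) :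
    IsNowhereDense M ∨ M = Set.univ := by
  have hM : IsMinimalSet_s1 F M := ⟨hMne, hMcl, hMinv, hMmin⟩
  have hfuniv : IsMinimalSet_s1 f univ :=
    ⟨univ_nonempty, isClosed_univ, mapsTo_univ f univ, fun b _ => (hfmin b).closure_eq.ge⟩
  have hFc : Continuous F := by
    rw [funext hF]
    fun_prop
  exact minimal_set_of_skew_product_on_circle_nowhere_dense_or_all_general hM hFc hfuniv hf
    (fun p => by rw [hF]) fun _ hφ _ hU h => h.isOpen_image_addCircle hφ hU
end

section
/- There exist a Cantor set C ⊆ ℝ (a nonempty compact perfect totally disconnected subset of the real line) and a continuous minimal map f : C → C such that exactly one point of C has two f-preimages in C and every other point of C has exactly one f-preimage in C. -/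
open Set Topology

/-!
Let `T : X → X` be a minimal homeomorphism of a Cantor set, fix a point `o`, and let
`g : X → A` be continuous off `o`, with every letter of the finite alphabet `A` occurring as a
cluster value of `g` at `o`. Augment each `x` by the sequence `n ↦ g (T^[n] x)`, where a visit of
the orbit to `o`, which happens at most once, may be recorded by any letter. The resulting system
is minimal, because a dense set of genuine itineraries sees every letter near `o`. A preimage of an
augmented point adds a letter for `T⁻¹ x` in front of the sequence; the choice of this letter is
forced unless `T⁻¹ x = o`, so exactly one point has `|A|` preimages. For the odometer
`x ↦ x + 1` on `ℤ_[2]` one can take `o = 0` and let `g` be the parity of the valuation.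
-/

open Filter Function

section MinimalMap

variable {X Y : Type*} [TopologicalSpace X] [TopologicalSpace Y]

/-- A self-map of a topological space is minimal if all its forward orbits are dense. It is stated
for bare maps, not for actions as `AddAction.IsMinimal`, since only iterates are needed. -/
def IsMinimalMap (f : X → X) : Prop :=
  ∀ x, Dense (range fun n => f^[n] x)

namespace IsMinimalMap

theorem of_semiconj {f : X → X} {g : Y → Y} {π : X → Y} (hf : IsMinimalMap f)
    (hπ : Continuous π) (hsurj : Surjective π) (h : Semiconj π f g) : IsMinimalMap g := by
  intro y
  obtain ⟨x, rfl⟩ := hsurj y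
  have hdense : Dense (π '' range fun n => f^[n] x) := hsurj.denseRange.dense_image hπ (hf x)
  rw [← range_comp] at hdense
  simpa only [comp_def, fun n => (h.iterate_right n).eq x] using hdense

variable [T1Space X] [Infinite X] {f : X → X}

theorem notMem_periodicPts (hf : IsMinimalMap f) (x : X) : x ∉ periodicPts f := by
  intro hx
  have hfin : (range fun n => f^[n] x).Finite :=
    (periodicOrbit f x).toMultiset.finite_toSet.subset <|
      range_subset_iff.2 (iterate_mem_periodicOrbit hx)
  have huniv : (range fun n => f^[n] x) = univ := by
    rw [← hfin.isClosed.closure_eq, (hf x).closure_eq]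
  exact infinite_univ (huniv ▸ hfin)

theorem perfectSpace (hf : IsMinimalMap f) : PerfectSpace X := by
  rw [perfectSpace_def, preperfect_iff_nhds]
  intro x _ U hU
  obtain ⟨_, ⟨n, rfl⟩, hyU⟩ := (hf (f x)).inter_nhds_nonempty hU
  exact ⟨f^[n] (f x), ⟨hyU, mem_univ _⟩, fun h =>
    hf.notMem_periodicPts x (mk_mem_periodicPts n.succ_pos h)⟩

end IsMinimalMap

end MinimalMap

theorem encard_preimage_conj {X Y : Type*} (e : X ≃ Y) (f : X → X) (y : Y) :
    (e.conj f ⁻¹' {y}).encard = (f ⁻¹' {e.symm y}).encard := by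
  rw [← e.injective.encard_image, e.image_eq_preimage_symm]
  congr 1
  ext z
  simp [e.eq_symm_apply]

section RealModel

variable {X : Type*} [TopologicalSpace X]

theorem exists_isEmbedding_nat_bool [CompactSpace X] [T2Space X] [TotallyDisconnectedSpace X]
    [SecondCountableTopology X] : ∃ φ : X → ℕ → Bool, IsEmbedding φ := by
  have : Countable (TopologicalSpace.Clopens X) :=
    TopologicalSpace.Clopens.countable_iff_secondCountable.2 inferInstance
  obtain ⟨U, hU⟩ := exists_surjective_nat (TopologicalSpace.Clopens X)
  have hcont : Continuous fun x n => (U n : Set X).boolIndicator x :=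
    continuous_pi fun n => (continuous_boolIndicator_iff_isClopen _).2 (U n).isClopen
  refine ⟨_, (hcont.isClosedEmbedding fun x y hxy => ?_).isEmbedding⟩
  by_contra hne
  obtain ⟨V, hV, hx, hy⟩ := exists_isClopen_of_totally_separated hne
  obtain ⟨n, hn⟩ := hU ⟨V, hV⟩
  have hmem : V.boolIndicator x = V.boolIndicator y := by simpa [hn] using congrFun hxy n
  exact hy ((mem_iff_boolIndicator V y).2 (hmem ▸ (mem_iff_boolIndicator V x).1 hx))

theorem exists_real_cantor_homeomorph [Nonempty X] [CompactSpace X] [T2Space X] [PerfectSpace X]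
    [TotallyDisconnectedSpace X] [SecondCountableTopology X] :
    ∃ C : Set ℝ, C.Nonempty ∧ IsCompact C ∧ Perfect C ∧ IsTotallyDisconnected C ∧
      Nonempty (X ≃ₜ C) := by
  obtain ⟨φ, hφ⟩ := exists_isEmbedding_nat_bool (X := X)
  let e : X → ℝ := fun x => cantorSetHomeomorphNatToBool.symm (φ x)
  have he : IsEmbedding e :=
    IsEmbedding.subtypeVal.comp (cantorSetHomeomorphNatToBool.symm.isEmbedding.comp hφ)
  have hcompact : IsCompact (range e) := isCompact_range he.continuous
  refine ⟨range e, range_nonempty e, hcompact, ⟨hcompact.isClosed, ?_⟩,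
    he.isTotallyDisconnected_range.2 inferInstance, ⟨he.toHomeomorph⟩⟩
  rintro _ ⟨x, rfl⟩
  simpa only [map_principal, image_univ] using
    (PerfectSpace.univ_preperfect x (mem_univ x)).map he.continuous.continuousAt he.injective

end RealModel

section ClusterValues

variable {X Y : Type*} [TopologicalSpace X] [TopologicalSpace Y]

theorem mapClusterPt_nhdsWithin_iff {f : X → Y} {s : Set X} {x : X} {b : Y} :
    MapClusterPt b (𝓝[s] x) f ↔ ∀ V, IsOpen V → b ∈ V → x ∈ closure (s ∩ f ⁻¹' V) := by
  rw [(nhds_basis_opens b).mapClusterPt_iff_frequently]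
  simp only [frequently_nhdsWithin_iff, mem_closure_iff_frequently, mem_inter_iff, mem_preimage,
    and_imp]
  grind

theorem mapClusterPt_nhdsWithin_inter_of_dense {f : X → Y} {s D : Set X} (hs : IsOpen s)
    (hf : ContinuousOn f s) (hD : Dense D) {x : X} {b : Y} (h : MapClusterPt b (𝓝[s] x) f) :
    MapClusterPt b (𝓝[s ∩ D] x) f := by
  rw [mapClusterPt_nhdsWithin_iff] at h ⊢
  intro V hV hb
  have hopen : IsOpen (s ∩ f ⁻¹' V) := hf.isOpen_inter_preimage hs hV
  rw [inter_right_comm]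
  exact closure_minimal (hD.open_subset_closure_inter hopen) isClosed_closure (h V hV hb)

theorem infinite_of_mapClusterPt [T1Space X] {f : X → Y} {x : X} {b : Y}
    (h : MapClusterPt b (𝓝[≠] x) f) : Infinite X :=
  have : NeBot (𝓝[≠] x) := (h.neBot.mono inf_le_right).of_map
  infinite_univ_iff.1 (infinite_of_mem_nhds x univ_mem)

end ClusterValues

section Itinerary

variable {X A : Type*} {T : X → X} {o : X} {g : X → A}

/-- The `g`-itinerary of a point under the map `T`. -/
def itinerary (T : X → X) (g : X → A) (x : X) : ℕ → A :=
  fun n => g (T^[n] x)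

/-- The points of `X` augmented by their `g`-itineraries, in which the visits to `o` may be
recorded by arbitrary letters. -/
def itinerarySpace (T : X → X) (o : X) (g : X → A) : Set (X × (ℕ → A)) :=
  {x | ∀ n, T^[n] x.1 ≠ o → x.2 n = itinerary T g x.1 n}

/-- The self-map of `itinerarySpace T o g` applying `T` to the point and the shift to the
sequence. -/
def itineraryShift (T : X → X) (o : X) (g : X → A) (x : itinerarySpace T o g) :
    itinerarySpace T o g :=
  ⟨(T x.1.1, fun n => x.1.2 (n + 1)), fun n => x.2 (n + 1)⟩

/-- A point augmented by its own itinerary. -/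
def withItinerary (T : X → X) (o : X) (g : X → A) (x : X) : itinerarySpace T o g :=
  ⟨(x, itinerary T g x), fun _ _ => rfl⟩

theorem semiconj_withItinerary :
    Semiconj (withItinerary T o g) T (itineraryShift T o g) :=
  fun _ => rfl

theorem iterate_itineraryShift_fst (n : ℕ) (x : itinerarySpace T o g) :
    ((itineraryShift T o g)^[n] x).1.1 = T^[n] x.1.1 :=
  (Semiconj.iterate_right (f := fun x : itinerarySpace T o g => x.1.1) (fun _ => rfl) n).eq x

theorem eq_withItinerary {x : itinerarySpace T o g} (hx : ∀ n, T^[n] x.1.1 ≠ o) :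
    x = withItinerary T o g x.1.1 :=
  Subtype.ext (Prod.ext rfl (funext fun n => x.2 n (hx n)))

theorem iterate_apply_ne_of_notMem_periodicPts (ho : o ∉ periodicPts T) (n : ℕ) :
    T^[n] (T o) ≠ o :=
  fun h => ho (mk_mem_periodicPts n.succ_pos h)

theorem iterate_eq_unique (ho : o ∉ periodicPts T) {x : X} {m n : ℕ} (hm : T^[m] x = o)
    (hn : T^[n] x = o) : m = n := by
  by_contra hne
  wlog hmn : m < n generalizing m n
  · exact this hn hm (Ne.symm hne) (by omega)
  obtain ⟨k, rfl⟩ : ∃ k, n = k + 1 + m := ⟨n - m - 1, by omega⟩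
  rw [iterate_add_apply, hm] at hn
  exact iterate_apply_ne_of_notMem_periodicPts ho k hn

theorem exists_iterate_avoiding (ho : o ∉ periodicPts T) (x : X) :
    ∃ m, ∀ n, T^[n] (T^[m] x) ≠ o := by
  by_cases h : ∃ m, T^[m] x = o
  · obtain ⟨m, rfl⟩ := h
    exact ⟨m + 1, fun n => iterate_succ_apply' T m x ▸
      iterate_apply_ne_of_notMem_periodicPts ho n⟩
  · exact ⟨0, not_exists.1 h⟩

section Fibers

theorem bijOn_head_fiber (hT : Injective T) {x : itinerarySpace T o g} {z : X}
    (hz : T z = x.1.1) :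
    BijOn (fun y => y.1.2 0) (itineraryShift T o g ⁻¹' {x}) {b | z ≠ o → b = g z} := by
  have fst_eq {y} (hy : itineraryShift T o g y = x) : y.1.1 = z := hT (by rw [hz, ← hy]; rfl)
  refine ⟨fun y hy hzo => ?_, fun y hy y' hy' hhead => ?_, fun b hb => ?_⟩
  · have hyz : y.1.1 = z := fst_eq hy
    exact hyz ▸ y.2 0 (hyz ▸ hzo)
  · refine Subtype.ext (Prod.ext ((fst_eq hy).trans (fst_eq hy').symm) (funext fun n => ?_))
    cases n with
    | zero => exact hhead
    | succ n => exact congrFun (congrArg (fun w => w.1.2) (hy.trans hy'.symm)) n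
  · have hmem : ((z, fun n => n.casesOn b x.1.2) : X × (ℕ → A)) ∈ itinerarySpace T o g := by
      rintro (_ | n)
      · exact hb
      · have hn := x.2 n
        rwa [← hz] at hn
    exact ⟨⟨_, hmem⟩, Subtype.ext (Prod.ext hz rfl), rfl⟩

theorem encard_fiber_eq_card (hT : Injective T) {x : itinerarySpace T o g} (hx : x.1.1 = T o) :
    (itineraryShift T o g ⁻¹' {x}).encard = ENat.card A := by
  rw [encard_congr (bijOn_head_fiber hT hx.symm).equiv]
  simp

theorem encard_fiber_eq_one (hT : Bijective T) {x : itinerarySpace T o g} (hx : x.1.1 ≠ T o) :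
    (itineraryShift T o g ⁻¹' {x}).encard = 1 := by
  obtain ⟨z, hz⟩ := hT.surjective x.1.1
  have hzo : z ≠ o := by rintro rfl; exact hx hz.symm
  rw [encard_congr (bijOn_head_fiber hT.injective hz).equiv]
  simp [hzo]

end Fibers

section Topology

variable [TopologicalSpace X] [TopologicalSpace A]

theorem continuous_itineraryShift (hT : Continuous T) : Continuous (itineraryShift T o g) := by
  unfold itineraryShift
  fun_prop

theorem continuousAt_comp_iterate [T1Space X] (hT : Continuous T) (hg : ContinuousOn g {o}ᶜ)
    {x : X} {n : ℕ} (hx : T^[n] x ≠ o) : ContinuousAt (fun y => g (T^[n] y)) x :=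
  (hg.continuousAt (isOpen_compl_singleton.mem_nhds hx)).comp (hT.iterate n).continuousAt

theorem isClosed_itinerarySpace [T1Space X] [T2Space A] (hT : Continuous T)
    (hg : ContinuousOn g {o}ᶜ) : IsClosed (itinerarySpace T o g) := by
  simp only [itinerarySpace, ofPred_forall]
  refine isClosed_iInter fun n => ?_
  have hopen : IsOpen {x : X × (ℕ → A) | T^[n] x.1 ≠ o} :=
    isOpen_compl_singleton.preimage ((hT.iterate n).comp continuous_fst)
  have hcont : ContinuousOn (fun x : X × (ℕ → A) => (x.2 n, itinerary T g x.1 n))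
      {x | T^[n] x.1 ≠ o} := fun x hx =>
    (ContinuousAt.prodMk (by fun_prop)
      ((continuousAt_comp_iterate hT hg hx).comp continuousAt_fst)).continuousWithinAt
  rw [← isOpen_compl_iff]
  convert hcont.isOpen_inter_preimage hopen isClosed_diagonal.isOpen_compl using 1
  ext x
  simp

theorem tendsto_withItinerary [T1Space X] (hT : Continuous T) (hg : ContinuousOn g {o}ᶜ)
    {l : Filter X} {x : itinerarySpace T o g} (hl : l ≤ 𝓝 x.1.1)
    (ho : ∀ n, T^[n] x.1.1 = o → Tendsto (fun y => g (T^[n] y)) l (𝓝 (x.1.2 n))) :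
    Tendsto (withItinerary T o g) l (𝓝 x) := by
  refine tendsto_subtype_rng.2 (Tendsto.prodMk_nhds hl (tendsto_pi_nhds.2 fun n => ?_))
  by_cases hn : T^[n] x.1.1 = o
  · exact ho n hn
  · rw [x.2 n hn]
    exact (continuousAt_comp_iterate hT hg hn).mono_left hl

theorem isOpenMap_iterate (hT : IsOpenMap T) (n : ℕ) : IsOpenMap T^[n] :=
  Nat.recOn n IsOpenMap.id fun _ ih => ih.comp hT

theorem mapClusterPt_comp_iterate (hT : IsOpenMap T) {x : X} {n : ℕ} (hx : T^[n] x = o) {b : A}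
    (hb : MapClusterPt b (𝓝[≠] o) g) :
    MapClusterPt b (𝓝[T^[n] ⁻¹' {o}ᶜ] x) fun y => g (T^[n] y) := by
  subst hx
  refine mapClusterPt_comp.2 (hb.mono ?_)
  rw [nhdsWithin, nhdsWithin, ← comap_principal, Filter.push_pull]
  exact inf_le_inf_right _ ((isOpenMap_iterate hT n).nhds_le x)

theorem dense_image_withItinerary [T1Space X] (hT : Continuous T) (hTo : IsOpenMap T)
    (ho : o ∉ periodicPts T) (hg : ContinuousOn g {o}ᶜ) (hgo : ∀ b, MapClusterPt b (𝓝[≠] o) g)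
    {D : Set X} (hD : Dense D) : Dense (withItinerary T o g '' D) := by
  intro x
  by_cases hx : ∃ m, T^[m] x.1.1 = o
  · obtain ⟨m, hm⟩ := hx
    have hopen : IsOpen (T^[m] ⁻¹' {o}ᶜ) := isOpen_compl_singleton.preimage (hT.iterate m)
    have hcont : ContinuousOn (fun y => g (T^[m] y)) (T^[m] ⁻¹' {o}ᶜ) := fun _ hy =>
      (continuousAt_comp_iterate hT hg hy).continuousWithinAt
    obtain ⟨l, hl, hlim⟩ := mapClusterPt_iff_ultrafilter.1 <|
      mapClusterPt_nhdsWithin_inter_of_dense hopen hcont hD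
        (mapClusterPt_comp_iterate hTo hm (hgo (x.1.2 m)))
    refine mem_closure_of_tendsto (tendsto_withItinerary hT hg (hl.trans inf_le_left) ?_)
      (Eventually.mono (hl self_mem_nhdsWithin) fun _ hy => mem_image_of_mem _ hy.2)
    intro n hn
    obtain rfl := iterate_eq_unique ho hm hn
    exact hlim
  · rw [eq_withItinerary (not_exists.1 hx)]
    have hcont : ContinuousAt (withItinerary T o g) x.1.1 :=
      tendsto_withItinerary hT hg le_rfl fun n hn => absurd ⟨n, hn⟩ hx
    exact mem_closure_image hcont (hD _)

theorem isMinimalMap_itineraryShift [T1Space X] (hT : Continuous T) (hTo : IsOpenMap T)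
    (hmin : IsMinimalMap T) (hg : ContinuousOn g {o}ᶜ)
    (hgo : ∀ b, MapClusterPt b (𝓝[≠] o) g) : IsMinimalMap (itineraryShift T o g) := by
  intro x
  have : Infinite X := infinite_of_mapClusterPt (hgo (g o))
  have ho : o ∉ periodicPts T := hmin.notMem_periodicPts o
  obtain ⟨m, hm⟩ := exists_iterate_avoiding ho x.1.1
  have hreg : (itineraryShift T o g)^[m] x = withItinerary T o g (T^[m] x.1.1) := by
    rw [← iterate_itineraryShift_fst] at hm ⊢
    exact eq_withItinerary hm
  refine (dense_image_withItinerary hT hTo ho hg hgo (hmin (T^[m] x.1.1))).mono ?_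
  rintro _ ⟨_, ⟨n, rfl⟩, rfl⟩
  refine ⟨n + m, ?_⟩
  simp only [iterate_add_apply, hreg]
  exact ((semiconj_withItinerary.iterate_right n).eq _).symm

theorem exists_real_cantor_minimal_encard_fiber [CompactSpace X] [T2Space X]
    [TotallyDisconnectedSpace X] [SecondCountableTopology X] [CompactSpace A] [T2Space A]
    [TotallyDisconnectedSpace A] [SecondCountableTopology A] (T : X ≃ₜ X)
    (hmin : IsMinimalMap T) (hg : ContinuousOn g {o}ᶜ)
    (hgo : ∀ b, MapClusterPt b (𝓝[≠] o) g) :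
    ∃ C : Set ℝ, C.Nonempty ∧ IsCompact C ∧ Perfect C ∧ IsTotallyDisconnected C ∧
      ∃ f : C → C, Continuous f ∧ IsMinimalMap f ∧
        ∃ p, (f ⁻¹' {p}).encard = ENat.card A ∧ ∀ x, x ≠ p → (f ⁻¹' {x}).encard = 1 := by
  have : Infinite X := infinite_of_mapClusterPt (hgo (g o))
  have ho : o ∉ periodicPts T := hmin.notMem_periodicPts o
  let F := itineraryShift T o g
  have hF : Continuous F := continuous_itineraryShift T.continuous
  have hFmin : IsMinimalMap F :=
    isMinimalMap_itineraryShift T.continuous T.isOpenMap hmin hg hgo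
  have : CompactSpace (itinerarySpace T o g) :=
    isCompact_iff_compactSpace.1 (isClosed_itinerarySpace T.continuous hg).isCompact
  have : Infinite (itinerarySpace T o g) :=
    .of_injective (withItinerary T o g) fun _ _ h => congrArg (fun y => y.1.1) h
  have : PerfectSpace (itinerarySpace T o g) := hFmin.perfectSpace
  obtain ⟨C, hne, hcompact, hperf, htd, ⟨h⟩⟩ :=
    exists_real_cantor_homeomorph (X := itinerarySpace T o g)
  refine ⟨C, hne, hcompact, hperf, htd, h.toEquiv.conj F,
    h.continuous.comp (hF.comp h.symm.continuous),
    hFmin.of_semiconj h.continuous h.surjective (h.toEquiv.semiconj_conj F),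
    h (withItinerary T o g (T o)), ?_, fun x hx => ?_⟩
  · rw [encard_preimage_conj]
    exact encard_fiber_eq_card T.injective (by simp [withItinerary])
  · rw [encard_preimage_conj]
    refine encard_fiber_eq_one T.bijective fun hTo => hx ?_
    have hreg : h.symm x = withItinerary T o g (T o) := by
      rw [← hTo]
      exact eq_withItinerary (hTo ▸ iterate_apply_ne_of_notMem_periodicPts ho)
    rw [← hreg, h.apply_symm_apply]

end Topology

end Itinerary

section Odometer

variable (p : ℕ) [Fact p.Prime]

theorem isMinimalMap_padicInt_add_one : IsMinimalMap fun x : ℤ_[p] => x + 1 := by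
  intro x
  have h : DenseRange fun n : ℕ => x + n :=
    (Homeomorph.addLeft x).surjective.denseRange.comp PadicInt.denseRange_natCast
      (Homeomorph.addLeft x).continuous
  simpa only [add_right_iterate_apply, nsmul_one, DenseRange] using h

variable {p}

theorem valuation_eq_of_norm_sub_lt {x y : ℤ_[p]} (h : ‖x - y‖ < ‖y‖) :
    x.valuation = y.valuation := by
  have hnorm : ‖x‖ = ‖y‖ := by
    rw [← norm_neg y] at h ⊢
    exact PadicInt.norm_eq_of_norm_add_lt_right (by rwa [← sub_eq_add_neg])
  have hy : y ≠ 0 := norm_pos_iff.1 ((norm_nonneg _).trans_lt h)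
  have hx : x ≠ 0 := norm_pos_iff.1 (hnorm ▸ norm_pos_iff.2 hy)
  have hp : (1 : ℝ) < p := mod_cast (Fact.out : p.Prime).one_lt
  rw [PadicInt.norm_eq_zpow_neg_valuation hx, PadicInt.norm_eq_zpow_neg_valuation hy] at hnorm
  exact_mod_cast neg_injective (zpow_right_injective₀ (by positivity) hp.ne' hnorm)

theorem continuousOn_valuation : ContinuousOn (PadicInt.valuation : ℤ_[p] → ℕ) {0}ᶜ := by
  intro z hz
  have hconst : ∀ᶠ x in 𝓝 z, x.valuation = z.valuation := by
    filter_upwards [Metric.ball_mem_nhds z (norm_pos_iff.2 hz)] with x hx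
    exact valuation_eq_of_norm_sub_lt (mem_ball_iff_norm.1 hx)
  exact (tendsto_nhds_of_eventually_eq hconst).mono_left inf_le_left

theorem mapClusterPt_natCast_valuation (k : ℕ) [NeZero k] (b : ZMod k) :
    MapClusterPt b (𝓝[≠] 0) fun z : ℤ_[p] => (z.valuation : ZMod k) := by
  have hp : ‖(p : ℤ_[p])‖ < 1 := PadicInt.norm_lt_one_iff_dvd _ |>.2 dvd_rfl
  have htop : Tendsto (fun n => b.val + k * n) atTop atTop :=
    tendsto_atTop_mono (fun n => (Nat.le_mul_of_pos_left n (NeZero.pos k)).trans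
      (Nat.le_add_left _ _)) tendsto_id
  have hpow : Tendsto (fun n => (p : ℤ_[p]) ^ (b.val + k * n)) atTop (𝓝[≠] 0) :=
    tendsto_nhdsWithin_iff.2 ⟨(tendsto_pow_atTop_nhds_zero_of_norm_lt_one hp).comp htop,
      .of_forall fun n => pow_ne_zero _ (NeZero.ne _)⟩
  refine .of_comp hpow (Tendsto.mapClusterPt (tendsto_const_nhds.congr fun n => ?_))
  simp

end Odometer

theorem exists_cantor_minimal_map_with_one_doubled_point_general (k : ℕ) [NeZero k] :
    ∃ C : Set ℝ, C.Nonempty ∧ IsCompact C ∧ Perfect C ∧ IsTotallyDisconnected C ∧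
      ∃ f : C → C, Continuous f ∧ IsMinimalMap f ∧
        ∃ p, (f ⁻¹' {p}).encard = k ∧ ∀ x, x ≠ p → (f ⁻¹' {x}).encard = 1 := by
  have hg : ContinuousOn (fun z : ℤ_[2] => (z.valuation : ZMod k)) {0}ᶜ :=
    continuous_of_discreteTopology.comp_continuousOn continuousOn_valuation
  simpa using exists_real_cantor_minimal_encard_fiber (Homeomorph.addRight (1 : ℤ_[2]))
    (isMinimalMap_padicInt_add_one 2) hg (mapClusterPt_natCast_valuation k)

/-- There exist a Cantor set `C ⊆ ℝ` (nonempty compact perfect totally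
disconnected) and a continuous minimal map `f : C → C` such that exactly one point of `C`
has two `f`-preimages and every other point has exactly one `f`-preimage. -/
theorem exists_cantor_minimal_map_with_one_doubled_point :
    ∃ C : Set ℝ, C.Nonempty ∧ IsCompact C ∧ Perfect C ∧ IsTotallyDisconnected C ∧
      ∃ f : ↥C → ↥C, Continuous f ∧
        (∀ x : ↥C, Dense (Set.range fun n => f^[n] x)) ∧
        ∃ p : ↥C,
          (∃ y₁ y₂ : ↥C, y₁ ≠ y₂ ∧ f y₁ = p ∧ f y₂ = p ∧
            ∀ y : ↥C, f y = p → y = y₁ ∨ y = y₂) ∧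
          ∀ x : ↥C, x ≠ p → ∃! y : ↥C, f y = x := by
  obtain ⟨C, hne, hcompact, hperf, htd, f, hf, hmin, p, hp, huniq⟩ :=
    exists_cantor_minimal_map_with_one_doubled_point_general 2
  refine ⟨C, hne, hcompact, hperf, htd, f, hf, hmin, p, ?_, fun x hx => ?_⟩
  · obtain ⟨y₁, y₂, hy, hfiber⟩ := encard_eq_two.1 hp
    have hmem (y : C) : f y = p ↔ y = y₁ ∨ y = y₂ := Set.ext_iff.1 hfiber y
    exact ⟨y₁, y₂, hy, (hmem y₁).2 (.inl rfl), (hmem y₂).2 (.inr rfl), fun y => (hmem y).1⟩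
  · obtain ⟨y, hfiber⟩ := encard_eq_one.1 (huniq x hx)
    exact ⟨y, hfiber.ge rfl, fun z hz => hfiber.le hz⟩
end
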